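/- Let n ≥ 2 and let F₀ : Bⁿ → ℂⁿ be locally biholomorphic with F₀(0) = 0, DF₀(0) = Id, and ∇(JF₀)(0) = Λ = (λ, 0, …, 0) with λ > 0 real. Assume that for every biholomorphic automorphism σ of Bⁿ the Koebe transform G of F₀ by σ satisfies |∇(JG)(0)| ≤ λ. Writing S^k_{ij} = S^k_{ij}F₀(0) and S⁰_{ij} = S⁰_{ij}F₀(0), the following equations hold: λ² + (n+1)·S¹₁₁·λ − (n+1)²·S⁰₁₁ − (n+1)² = 0, and S¹₁ⱼ·λ − (n+1)·S⁰₁ⱼ = 0 for every j = 2,…,n. -/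

import Mathlib

open scoped BigOperators

noncomputable section

/-- Partial derivative `∂f/∂z_i` of a scalar-valued holomorphic function on `ℂⁿ`. -/
def pd (n : ℕ) (i : Fin n) (f : (Fin n → ℂ) → ℂ) (z : Fin n → ℂ) : ℂ :=
  fderiv ℂ f z (Pi.single i 1)

/-- Second partial derivative `∂²f/∂z_i∂z_j`. -/
def pd2 (n : ℕ) (i j : Fin n) (f : (Fin n → ℂ) → ℂ) (z : Fin n → ℂ) : ℂ :=
  pd n i (fun w => pd n j f w) z

/-- Complex Jacobian matrix `DF`. -/
def Jac (n : ℕ) (F : (Fin n → ℂ) → (Fin n → ℂ)) (z : Fin n → ℂ) :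
    Matrix (Fin n) (Fin n) ℂ :=
  Matrix.of fun i j => pd n j (fun w => F w i) z

/-- Jacobian determinant `JF = det DF`. -/
def JDet (n : ℕ) (F : (Fin n → ℂ) → (Fin n → ℂ)) (z : Fin n → ℂ) : ℂ :=
  (Jac n F z).det

/-- Oda's Schwarzian derivative `S^k_{ij}F`; the derivative of `log JF` is expressed
by the logarithmic derivative `(∂JF/∂z)/JF`, which is the derivative of any local
branch of the logarithm. -/
def oSchw (n : ℕ) (F : (Fin n → ℂ) → (Fin n → ℂ)) (i j k : Fin n) (z : Fin n → ℂ) : ℂ :=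
  (∑ l, pd2 n i j (fun w => F w l) z * (Jac n F z)⁻¹ k l)
    - (1 / ((n : ℂ) + 1)) *
        ((if k = i then 1 else 0) * (pd n j (JDet n F) z / JDet n F z)
          + (if k = j then 1 else 0) * (pd n i (JDet n F) z / JDet n F z))

/-- `S⁰_{ij}F`, defined through a local branch `u₀` of `(JF)^{-1/(n+1)}`. -/
def oS0 (n : ℕ) (F : (Fin n → ℂ) → (Fin n → ℂ)) (u₀ : (Fin n → ℂ) → ℂ)
    (i j : Fin n) (z : Fin n → ℂ) : ℂ :=
  (u₀ z)⁻¹ * (pd2 n i j u₀ z - ∑ k, oSchw n F i j k z * pd n k u₀ z)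

/-- Euclidean norm on `ℂⁿ`. -/
def euclNorm (n : ℕ) (v : Fin n → ℂ) : ℝ := Real.sqrt (∑ i, ‖v i‖ ^ 2)

/-- Euclidean open unit ball `Bⁿ ⊆ ℂⁿ`. -/
def eball (n : ℕ) : Set (Fin n → ℂ) := {z | euclNorm n z < 1}

/-- A biholomorphic automorphism of the unit ball: a holomorphic bijection of `Bⁿ`
onto itself with holomorphic inverse. -/
def IsAutB (n : ℕ) (σ : (Fin n → ℂ) → (Fin n → ℂ)) : Prop :=
  DifferentiableOn ℂ σ (eball n) ∧ Set.BijOn σ (eball n) (eball n) ∧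
    ∃ τ : (Fin n → ℂ) → (Fin n → ℂ), DifferentiableOn ℂ τ (eball n) ∧
      (∀ z ∈ eball n, τ (σ z) = z) ∧ (∀ w ∈ eball n, σ (τ w) = w)

/-- The automorphism of `Bⁿ` with `σ(0) = (ζ₁,0,…,0)` used in Lemma 3.2. -/
def sigmaA (n : ℕ) [NeZero n] (ζ : ℂ) (z : Fin n → ℂ) : Fin n → ℂ := fun i =>
  if i = 0 then (z 0 + ζ) / (1 + (starRingEnd ℂ) ζ * z 0)
  else ((Real.sqrt (1 - ‖ζ‖ ^ 2) : ℂ) * z i) / (1 + (starRingEnd ℂ) ζ * z 0)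

/-- The Koebe transform `G(z) = Dσ(0)⁻¹ DF₀(σ(0))⁻¹ (F₀(σ(z)) − F₀(σ(0)))`. -/
def Koebe (n : ℕ) (F₀ σ : (Fin n → ℂ) → (Fin n → ℂ)) (z : Fin n → ℂ) : Fin n → ℂ :=
  Matrix.mulVec ((Jac n σ 0)⁻¹ * (Jac n F₀ (σ 0))⁻¹) (F₀ (σ z) - F₀ (σ 0))

/-- The conjugation `G(z) = U⁻¹·F₀(U·z)` of `F₀` by a unitary matrix `U`. -/
def unitKoebe (n : ℕ) (F₀ : (Fin n → ℂ) → (Fin n → ℂ)) (U : Matrix (Fin n) (Fin n) ℂ)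
    (z : Fin n → ℂ) : Fin n → ℂ :=
  Matrix.mulVec U⁻¹ (F₀ (Matrix.mulVec U z))

/-- The Schwarzian derivative operator `SF(z)(v) = (vᵗ𝕊¹F(z)v, …, vᵗ𝕊ⁿF(z)v)`. -/
def SchwOp (n : ℕ) (F : (Fin n → ℂ) → (Fin n → ℂ)) (z v : Fin n → ℂ) : Fin n → ℂ :=
  fun k => ∑ i, ∑ j, v i * oSchw n F i j k z * v j

/-- The squared Bergman norm `‖v‖_z² = Σ_{i,j} g_{ij}(z) v_i conj(v_j)` on `Bⁿ`. -/
def bergSq (n : ℕ) (z v : Fin n → ℂ) : ℝ :=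
  (∑ i, ∑ j, (((n : ℂ) + 1) / (((1 - (euclNorm n z) ^ 2 : ℝ) : ℂ)) ^ 2) *
      ((if i = j then ((1 - (euclNorm n z) ^ 2 : ℝ) : ℂ) else 0)
        + (starRingEnd ℂ) (z i) * z j) * v i * (starRingEnd ℂ) (v j)).re

/-- Membership in the linearly invariant family `F_α`. -/
def memF (n : ℕ) (α : ℝ) (F : (Fin n → ℂ) → (Fin n → ℂ)) : Prop :=
  DifferentiableOn ℂ F (eball n) ∧ (∀ z ∈ eball n, JDet n F z ≠ 0) ∧
    F 0 = 0 ∧ Jac n F 0 = 1 ∧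
    ∀ z ∈ eball n, ∀ v : Fin n → ℂ, bergSq n z v = 1 →
      Real.sqrt (bergSq n z (SchwOp n F z v)) ≤ α

/-!
Let `G` be the Koebe transform of `F₀` by the automorphism `σ` of the ball carrying `0` to `ζ e_k`
along the `k`-th axis, and let `s = √(1 - |ζ|²)`. Since `Jσ = (s / (1 + ζ̄ z_k)) ^ (n + 1)`, a
constant multiple of `u₀(σ z) (1 + ζ̄ z_k)` is an `(n + 1)`-st root of `1 / JG`, whence
`∂_i JG(0) = -(n + 1) (s ^ m (∂_i u₀ / u₀)(ζ e_k) + δ_{ik} ζ̄)`, with `m = 2` for `i = k` and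
`m = 1` otherwise. For `i = 1`, extremality makes the modulus of the right-hand side maximal at
`ζ = 0`. There `s` is stationary, so the vanishing of the first variation in `ζ` expresses
`∂_k ∂_1 u₀(0)` through first derivatives of `u₀`; interchanging the mixed partials, this is the
asserted equation for `S⁰_{1k}`.

Holomorphy provides only one complex derivative, so the differentiability of `∂_1 u₀` needs an
argument: by the Schwarz lemma, difference quotients in a fixed direction converge uniformly.
-/

open Filter Set
open scoped Topology

theorem det_updateCol_diagonal {ι R : Type*} [Fintype ι] [DecidableEq ι] [CommRing R] (d b : ι → R)
    (k : ι) :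
    ((Matrix.diagonal d).updateCol k b).det = (∏ i ∈ Finset.univ.erase k, d i) * b k := by
  rw [← Matrix.cramer_apply, Matrix.cramer_eq_adjugate_mulVec, Matrix.adjugate_diagonal,
    Matrix.mulVec_diagonal]

section Calculus

variable {𝕜 D E F : Type*} [NontriviallyNormedField 𝕜] [NormedAddCommGroup D] [NormedSpace 𝕜 D]
  [NormedAddCommGroup E] [NormedSpace 𝕜 E] [NormedAddCommGroup F] [NormedSpace 𝕜 F]

theorem differentiableAt_clm_of_apply [CompleteSpace 𝕜] [FiniteDimensional 𝕜 E]
    {G : D → E →L[𝕜] F} {x : D} (hG : ∀ v, DifferentiableAt 𝕜 (fun z => G z v) x) :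
    DifferentiableAt 𝕜 G x := by
  let b := Module.finBasis 𝕜 E
  have hexpand : G = fun z => ∑ i, (b.coord i).toContinuousLinearMap.smulRight (G z (b i)) := by
    funext z
    refine ContinuousLinearMap.coe_injective (b.ext fun j => ?_)
    simp [Finsupp.single_apply, ite_smul]
  rw [hexpand]
  exact DifferentiableAt.fun_sum fun i _ =>
    (ContinuousLinearMap.smulRightL 𝕜 E F (b.coord i).toContinuousLinearMap).differentiableAt.comp x
      (hG (b i))

theorem hasFDerivAt_div {f g : E → 𝕜} {f' g' : E →L[𝕜] 𝕜} {x : E} (hf : HasFDerivAt f f' x)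
    (hg : HasFDerivAt g g' x) (hx : g x ≠ 0) :
    HasFDerivAt (fun w => f w / g w) ((g x)⁻¹ • (f' - (f x / g x) • g')) x := by
  simp only [div_eq_mul_inv]
  refine (hf.fun_mul ((hasDerivAt_inv hx).comp_hasFDerivAt x hg)).congr_fderiv ?_
  ext v
  simp only [smul_apply, add_apply, sub_apply, smul_eq_mul, Function.comp_apply]
  field_simp
  ring

theorem hasFDerivAt_of_pow_mul_eq_one {m : ℕ} {u J : E → 𝕜} {u' : E →L[𝕜] 𝕜} {z : E}
    (hu : HasFDerivAt u u' z)
    (hpow : ∀ᶠ w in 𝓝 z, u w ^ (m + 1) * J w = 1) :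
    HasFDerivAt J (-(((m : 𝕜) + 1) * J z / u z) • u') z := by
  have huz : u z ≠ 0 := fun h => by simpa [h] using hpow.self_of_nhds
  have hJ : J =ᶠ[𝓝 z] fun w => (u w ^ (m + 1))⁻¹ :=
    hpow.mono fun w hw => eq_inv_of_mul_eq_one_right hw
  have hinv := ((hasDerivAt_pow (m + 1) (u z)).fun_inv (pow_ne_zero _ huz)).comp_hasFDerivAt z hu
  refine (hinv.congr_of_eventuallyEq hJ).congr_fderiv ?_
  rw [hJ.self_of_nhds]
  congr 1
  rw [Nat.cast_succ, add_tsub_cancel_right]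
  field_simp
  ring

end Calculus

section Holomorphic

open Metric

variable {E F : Type*} [NormedAddCommGroup E] [NormedSpace ℂ E]
  [NormedAddCommGroup F] [NormedSpace ℂ F]

theorem mapsTo_closedBall_two_mul_of_norm_le {X V : Type*} [SeminormedAddCommGroup V] {f : X → V}
    {s : Set X} {c : X} {M : ℝ} (hc : c ∈ s) (hM : ∀ z ∈ s, ‖f z‖ ≤ M) :
    MapsTo f s (closedBall (f c) (2 * M)) := fun z hz => by
  rw [mem_closedBall, dist_eq_norm, two_mul]
  exact (norm_sub_le _ _).trans (add_le_add (hM z hz) (hM c hc))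

theorem uniformCauchySeqOn_fderiv_ball {ι : Type*} {l : Filter ι} {G : ι → E → F} {c : E} {R : ℝ}
    (hR : 0 < R) (hG : ∀ᶠ i in l, DifferentiableOn ℂ (G i) (ball c R))
    (hcauchy : UniformCauchySeqOn G l (ball c R)) :
    UniformCauchySeqOn (fun i => fderiv ℂ (G i)) l (ball c (R / 2)) := by
  intro V hV
  obtain ⟨ε, hε, hεV⟩ := mem_uniformity_dist.1 hV
  have hδ : 0 < ε * R / 8 := by positivity
  filter_upwards [hcauchy _ (dist_mem_uniformity hδ), hG.prod_mk hG] with ⟨i, j⟩ hij ⟨hi, hj⟩ x hx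
  have hsub : ball x (R / 2) ⊆ ball c R := ball_subset_ball' (by linarith [mem_ball.1 hx])
  have hxc : x ∈ ball x (R / 2) := mem_ball_self (half_pos hR)
  have hnhds : ball c R ∈ 𝓝 x := isOpen_ball.mem_nhds (hsub hxc)
  have hsmall : ∀ z ∈ ball x (R / 2), ‖(G i - G j) z‖ ≤ ε * R / 8 := fun z hz =>
    (dist_eq_norm (G i z) (G j z) ▸ hij z (hsub hz)).le
  refine hεV ?_
  calc dist (fderiv ℂ (G i) x) (fderiv ℂ (G j) x)
      = ‖fderiv ℂ (G i - G j) x‖ := by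
        rw [dist_eq_norm, fderiv_sub (hi.differentiableAt hnhds) (hj.differentiableAt hnhds)]
    _ ≤ 2 * (ε * R / 8) / (R / 2) := Complex.norm_fderiv_le_div_of_mapsTo_ball
        ((hi.sub hj).mono hsub) (mapsTo_closedBall_two_mul_of_norm_le hxc hsmall) (half_pos hR)
    _ < ε := by field_simp; linarith

theorem differentiableAt_of_tendstoUniformlyOn_ball [CompleteSpace F] {ι : Type*} {l : Filter ι}
    [l.NeBot] {G : ι → E → F} {g : E → F} {c : E} {R : ℝ} (hR : 0 < R)
    (hG : ∀ᶠ i in l, DifferentiableOn ℂ (G i) (ball c R))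
    (hlim : TendstoUniformlyOn G g l (ball c R)) : DifferentiableAt ℂ g c := by
  have hball : ∀ᶠ x in 𝓝 c, x ∈ ball c R := ball_mem_nhds c hR
  have hcauchy := uniformCauchySeqOn_fderiv_ball hR hG hlim.uniformCauchySeqOn
  have hlim' : TendstoUniformlyOn (fun i => fderiv ℂ (G i))
      (fun x => limUnder l fun i => fderiv ℂ (G i) x) l (ball c (R / 2)) :=
    hcauchy.tendstoUniformlyOn_of_tendsto fun x hx =>
      tendsto_nhds_limUnder (cauchy_map_iff_exists_tendsto.1 (hcauchy.cauchy_map hx))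
  refine (hasFDerivAt_of_tendstoUniformlyOnFilter (𝕜 := ℂ)
    (hlim'.tendstoUniformlyOnFilter.mono_right (le_principal_iff.2 (ball_mem_nhds c (half_pos hR))))
    ?_ (hball.mono fun x hx => hlim.tendsto_at hx)).differentiableAt
  filter_upwards [hG.prod_mk hball] with ⟨i, x⟩ ⟨hi, hx⟩
  exact (hi.differentiableAt (isOpen_ball.mem_nhds hx)).hasFDerivAt

-- The Schwarz lemma for `h`, and once more for its difference quotient `dslope h 0`.
theorem norm_dslope_sub_deriv_le [CompleteSpace F] {h : ℂ → F} {ρ M : ℝ}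
    (hh : DifferentiableOn ℂ h (ball 0 ρ)) (hM : ∀ ξ ∈ ball (0 : ℂ) ρ, ‖h ξ‖ ≤ M)
    {t : ℂ} (ht : t ∈ ball 0 ρ) : ‖dslope h 0 t - deriv h 0‖ ≤ 4 * M / ρ ^ 2 * ‖t‖ := by
  have hρ : 0 < ρ := pos_of_mem_ball ht
  have h0 : (0 : ℂ) ∈ ball 0 ρ := mem_ball_self hρ
  have hslope : ∀ ξ ∈ ball (0 : ℂ) ρ, ‖dslope h 0 ξ‖ ≤ 2 * M / ρ := fun ξ hξ =>
    Complex.norm_dslope_le_div_of_mapsTo_ball hh (mapsTo_closedBall_two_mul_of_norm_le h0 hM) hξ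
  have hdiff : DifferentiableOn ℂ (dslope h 0) (ball 0 ρ) :=
    (Complex.differentiableOn_dslope (ball_mem_nhds 0 hρ)).2 hh
  have hlip := Complex.dist_le_div_mul_dist_of_mapsTo_ball hdiff
    (mapsTo_closedBall_two_mul_of_norm_le h0 hslope) ht
  rw [dslope_same, dist_eq_norm, dist_zero_right] at hlip
  exact hlip.trans_eq (by ring)

theorem norm_slope_line_sub_fderiv_le [CompleteSpace F] {f : E → F} {x v : E} {ρ M : ℝ}
    (hf : ∀ ξ ∈ ball (0 : ℂ) ρ, DifferentiableAt ℂ f (x + ξ • v))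
    (hM : ∀ ξ ∈ ball (0 : ℂ) ρ, ‖f (x + ξ • v)‖ ≤ M) {t : ℂ} (ht : t ∈ ball 0 ρ) (ht0 : t ≠ 0) :
    ‖t⁻¹ • (f (x + t • v) - f x) - fderiv ℂ f x v‖ ≤ 4 * M / ρ ^ 2 * ‖t‖ := by
  have hline : ∀ ξ ∈ ball (0 : ℂ) ρ,
      HasDerivAt (fun ξ : ℂ => f (x + ξ • v)) (fderiv ℂ f (x + ξ • v) v) ξ := fun ξ hξ =>
    (hf ξ hξ).hasFDerivAt.comp_hasDerivAt ξ
      (by simpa using ((hasDerivAt_id ξ).smul_const v).const_add x)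
  have hderiv := (hline 0 (mem_ball_self (pos_of_mem_ball ht))).deriv
  have hbound := norm_dslope_sub_deriv_le
    (fun ξ hξ => (hline ξ hξ).differentiableAt.differentiableWithinAt) hM ht
  simpa [hderiv, dslope_of_ne _ ht0, slope_def_module] using hbound

theorem differentiableAt_fderiv_apply [CompleteSpace F] {f : E → F} {x₀ : E}
    (hf : ∀ᶠ z in 𝓝 x₀, DifferentiableAt ℂ f z) (v : E) :
    DifferentiableAt ℂ (fun z => fderiv ℂ f z v) x₀ := by
  have hbdd : ∀ᶠ z in 𝓝 x₀, ‖f z‖ < ‖f x₀‖ + 1 :=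
    hf.self_of_nhds.continuousAt.norm.eventually_lt continuousAt_const (lt_add_one _)
  obtain ⟨R, hR, hball⟩ := eventually_nhds_iff_ball.1 (hf.and hbdd)
  obtain ⟨ρ, hρ, hρv⟩ : ∃ ρ > 0, ρ * ‖v‖ ≤ R / 2 :=
    ⟨R / 2 / (‖v‖ + 1), by positivity, by
      rw [div_mul_eq_mul_div, div_le_iff₀ (by positivity)]
      nlinarith [norm_nonneg v]⟩
  have hmem : ∀ x ∈ ball x₀ (R / 2), ∀ ξ ∈ ball (0 : ℂ) ρ, x + ξ • v ∈ ball x₀ R := by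
    intro x hx ξ hξ
    rw [mem_ball_zero_iff] at hξ
    rw [mem_ball_iff_norm] at hx ⊢
    calc ‖x + ξ • v - x₀‖ = ‖(x - x₀) + ξ • v‖ := by rw [add_sub_right_comm]
      _ ≤ ‖x - x₀‖ + ‖ξ‖ * ‖v‖ := (norm_add_le _ _).trans_eq (by rw [norm_smul])
      _ ≤ ‖x - x₀‖ + ρ * ‖v‖ := by gcongr
      _ < R := by linarith
  have hnear : ∀ᶠ t in 𝓝[≠] (0 : ℂ), t ∈ ball 0 ρ :=
    mem_nhdsWithin_of_mem_nhds (ball_mem_nhds 0 hρ)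
  refine differentiableAt_of_tendstoUniformlyOn_ball (l := 𝓝[≠] (0 : ℂ)) (R := R / 2)
    (G := fun t x => t⁻¹ • (f (x + t • v) - f x)) (half_pos hR) ?_ ?_
  · filter_upwards [hnear] with t ht x hx
    have hshift := (hball _ (hmem x hx t ht)).1.comp x (differentiableAt_id.add_const (t • v))
    have hbase := (hball x (ball_subset_ball (half_le_self hR.le) hx)).1
    exact ((hshift.sub hbase).const_smul _).differentiableWithinAt
  · rw [Metric.tendstoUniformlyOn_iff]
    intro ε hε
    have hlim : Tendsto (fun t : ℂ => 4 * (‖f x₀‖ + 1) / ρ ^ 2 * ‖t‖) (𝓝[≠] 0) (𝓝 0) :=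
      (Continuous.tendsto' (by fun_prop) 0 0 (by simp)).mono_left nhdsWithin_le_nhds
    filter_upwards [hnear, self_mem_nhdsWithin, hlim.eventually_lt_const hε] with t ht ht0 hlt x hx
    rw [dist_comm, dist_eq_norm]
    exact (norm_slope_line_sub_fderiv_le (fun ξ hξ => (hball _ (hmem x hx ξ hξ)).1)
      (fun ξ hξ => (hball _ (hmem x hx ξ hξ)).2.le) ht ht0).trans_lt hlt

theorem fderiv_fderiv_apply_comm [FiniteDimensional ℂ E] [CompleteSpace F] {f : E → F} {x₀ : E}
    (hf : ∀ᶠ z in 𝓝 x₀, DifferentiableAt ℂ f z) (v w : E) :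
    fderiv ℂ (fun z => fderiv ℂ f z v) x₀ w = fderiv ℂ (fun z => fderiv ℂ f z w) x₀ v := by
  have hdiff : DifferentiableAt ℂ (fderiv ℂ f) x₀ :=
    differentiableAt_clm_of_apply (differentiableAt_fderiv_apply hf)
  have hsymm := second_derivative_symmetric_of_eventually
    (hf.mono fun _ hz => hz.hasFDerivAt) hdiff.hasFDerivAt w v
  simpa [fderiv_clm_apply hdiff (differentiableAt_const _)] using hsymm

end Holomorphic

section Jacobian

variable {n : ℕ}

theorem Jac_eq_toMatrix' {F : (Fin n → ℂ) → (Fin n → ℂ)} {F' : (Fin n → ℂ) →L[ℂ] (Fin n → ℂ)}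
    {z : Fin n → ℂ} (hF : HasFDerivAt F F' z) :
    Jac n F z = LinearMap.toMatrix' (F' : (Fin n → ℂ) →ₗ[ℂ] (Fin n → ℂ)) := by
  ext i j
  simp [Jac, pd, (hasFDerivAt_pi'.1 hF i).fderiv, LinearMap.toMatrix'_apply]

theorem JDet_eq_det {F : (Fin n → ℂ) → (Fin n → ℂ)} {F' : (Fin n → ℂ) →L[ℂ] (Fin n → ℂ)}
    {z : Fin n → ℂ} (hF : HasFDerivAt F F' z) : JDet n F z = F'.det := by
  rw [JDet, Jac_eq_toMatrix' hF, LinearMap.det_toMatrix', ContinuousLinearMap.det]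

theorem JDet_Koebe {F σ : (Fin n → ℂ) → (Fin n → ℂ)} {z : Fin n → ℂ}
    (hF : DifferentiableAt ℂ F (σ z)) (hσ : DifferentiableAt ℂ σ z) :
    JDet n (Koebe n F σ) z =
      (JDet n σ 0)⁻¹ * (JDet n F (σ 0))⁻¹ * (JDet n F (σ z) * JDet n σ z) := by
  set A := (Jac n σ 0)⁻¹ * (Jac n F (σ 0))⁻¹ with hA
  have hderiv : HasFDerivAt (Koebe n F σ)
      ((Matrix.toLin' A).toContinuousLinearMap.comp ((fderiv ℂ F (σ z)).comp (fderiv ℂ σ z))) z :=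
    (Matrix.toLin' A).toContinuousLinearMap.hasFDerivAt.comp z
      ((hF.hasFDerivAt.comp z hσ.hasFDerivAt).sub_const _)
  have hdetA : A.det = (JDet n σ 0)⁻¹ * (JDet n F (σ 0))⁻¹ := by
    simp [hA, JDet, Matrix.det_nonsing_inv]
  rw [JDet_eq_det hderiv, JDet_eq_det hF.hasFDerivAt, JDet_eq_det hσ.hasFDerivAt, ← hdetA,
    ← LinearMap.det_toLin' A]
  simp [ContinuousLinearMap.det, LinearMap.det_comp]

-- `(u ∘ σ) · v`, normalised at the origin, is an `(n+1)`-st root of `1 / JG`.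
theorem pd_JDet_Koebe {F σ : (Fin n → ℂ) → (Fin n → ℂ)} {u v : (Fin n → ℂ) → ℂ}
    (hF : ∀ᶠ w in 𝓝 (σ 0), DifferentiableAt ℂ F w) (hσ : ∀ᶠ z in 𝓝 0, DifferentiableAt ℂ σ z)
    (hu : DifferentiableAt ℂ u (σ 0)) (hv : DifferentiableAt ℂ v 0)
    (hupow : ∀ᶠ w in 𝓝 (σ 0), u w ^ (n + 1) * JDet n F w = 1)
    (hvpow : ∀ᶠ z in 𝓝 0, v z ^ (n + 1) * JDet n σ z = 1) (i : Fin n) :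
    pd n i (JDet n (Koebe n F σ)) 0 = -((n : ℂ) + 1) *
      (fderiv ℂ u (σ 0) (fderiv ℂ σ 0 (Pi.single i 1)) / u (σ 0) + pd n i v 0 / v 0) := by
  have hσ0 := hσ.self_of_nhds
  have hu0 := hupow.self_of_nhds
  have hv0 := hvpow.self_of_nhds
  have hune : u (σ 0) ≠ 0 := fun h => by simp [h] at hu0
  have hvne : v 0 ≠ 0 := fun h => by simp [h] at hv0
  have hinv : (JDet n σ 0)⁻¹ * (JDet n F (σ 0))⁻¹ = (u (σ 0) * v 0) ^ (n + 1) := by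
    rw [← eq_inv_of_mul_eq_one_left hv0, ← eq_inv_of_mul_eq_one_left hu0, ← mul_pow, mul_comm]
  have hroot : ∀ᶠ z in 𝓝 0,
      ((u (σ 0) * v 0)⁻¹ * (u (σ z) * v z)) ^ (n + 1) * JDet n (Koebe n F σ) z = 1 := by
    filter_upwards [hσ, hσ0.continuousAt.eventually hF, hσ0.continuousAt.eventually hupow, hvpow]
      with z hσz hFz huz hvz
    rw [JDet_Koebe hFz hσz, hinv]
    simp only [mul_pow, inv_pow]
    field_simp
    linear_combination v z ^ (n + 1) * JDet n σ z * huz + hvz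
  have hderiv := hasFDerivAt_of_pow_mul_eq_one
    (((hu.hasFDerivAt.comp 0 hσ0.hasFDerivAt).mul hv.hasFDerivAt).const_mul (u (σ 0) * v 0)⁻¹) hroot
  have hnorm : JDet n (Koebe n F σ) 0 = 1 := by
    simpa only [inv_mul_cancel₀ (mul_ne_zero hune hvne), one_pow, one_mul] using hroot.self_of_nhds
  rw [pd, hderiv.fderiv, hnorm]
  simp only [pd, smul_apply, add_apply, ContinuousLinearMap.comp_apply, Function.comp_apply,
    Pi.mul_apply, smul_eq_mul]
  field_simp
  ring

end Jacobian

section Ball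

variable {n : ℕ}

theorem euclNorm_eq_norm_toLp (z : Fin n → ℂ) : euclNorm n z = ‖WithLp.toLp 2 z‖ :=
  (EuclideanSpace.norm_eq _).symm

theorem continuous_euclNorm : Continuous (euclNorm n) := by
  unfold euclNorm
  fun_prop

theorem norm_apply_le_euclNorm (z : Fin n → ℂ) (i : Fin n) : ‖z i‖ ≤ euclNorm n z := by
  simpa [euclNorm_eq_norm_toLp] using PiLp.norm_apply_le (WithLp.toLp 2 z) i

theorem mem_eball_iff {z : Fin n → ℂ} : z ∈ eball n ↔ 0 < 1 - ∑ i, ‖z i‖ ^ 2 := by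
  rw [eball, mem_ofPred_eq, euclNorm, Real.sqrt_lt' one_pos, one_pow, sub_pos]

theorem isOpen_setOf_euclNorm_lt (r : ℝ) : IsOpen {z : Fin n → ℂ | euclNorm n z < r} :=
  isOpen_lt continuous_euclNorm continuous_const

end Ball

section AxisAut

variable {n : ℕ} {k : Fin n} {ζ : ℂ} {z : Fin n → ℂ}

/-- The automorphism of the unit ball that carries the origin to `ζ • e_k` along the `k`-th
coordinate axis, generalising `sigmaA` from the first axis to an arbitrary one. -/
def axisAut (k : Fin n) (ζ : ℂ) (z : Fin n → ℂ) : Fin n → ℂ := fun i =>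
  (if i = k then z k + ζ else √(1 - ‖ζ‖ ^ 2) * z i) / (1 + starRingEnd ℂ ζ * z k)

theorem one_sub_norm_sq_pos (hζ : ‖ζ‖ < 1) : 0 < 1 - ‖ζ‖ ^ 2 :=
  sub_pos.2 (pow_lt_one₀ (norm_nonneg ζ) hζ two_ne_zero)

theorem ofReal_sqrt_one_sub_norm_sq_sq (hζ : ‖ζ‖ < 1) :
    (√(1 - ‖ζ‖ ^ 2) : ℂ) ^ 2 = 1 - starRingEnd ℂ ζ * ζ := by
  rw [← Complex.ofReal_pow, Real.sq_sqrt (one_sub_norm_sq_pos hζ).le, Complex.conj_mul']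
  push_cast
  rfl

theorem ofReal_sqrt_one_sub_norm_sq_ne_zero (hζ : ‖ζ‖ < 1) : (√(1 - ‖ζ‖ ^ 2) : ℂ) ≠ 0 :=
  Complex.ofReal_ne_zero.2 (Real.sqrt_pos.2 (one_sub_norm_sq_pos hζ)).ne'

theorem one_add_conj_mul_ne_zero {w : ℂ} (hζ : ‖ζ‖ < 1) (hw : ‖w‖ < 1) :
    1 + starRingEnd ℂ ζ * w ≠ 0 := by
  intro h
  have hnorm : ‖ζ‖ * ‖w‖ = 1 := by
    rw [← Complex.norm_conj ζ, ← norm_mul, eq_neg_of_add_eq_zero_right h, norm_neg, norm_one]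
  exact (mul_lt_one_of_nonneg_of_lt_one_left (norm_nonneg ζ) hζ hw.le).ne hnorm

theorem one_add_conj_mul_apply_ne_zero (hζ : ‖ζ‖ < 1) (hz : z ∈ eball n) (k : Fin n) :
    1 + starRingEnd ℂ ζ * z k ≠ 0 :=
  one_add_conj_mul_ne_zero hζ ((norm_apply_le_euclNorm z k).trans_lt hz)

theorem norm_one_add_conj_mul_sq_sub_norm_add_sq (ζ w : ℂ) :
    ‖1 + starRingEnd ℂ ζ * w‖ ^ 2 - ‖w + ζ‖ ^ 2 = (1 - ‖ζ‖ ^ 2) * (1 - ‖w‖ ^ 2) := by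
  simp only [← Complex.normSq_eq_norm_sq, Complex.normSq_apply, Complex.add_re, Complex.add_im,
    Complex.mul_re, Complex.mul_im, Complex.conj_re, Complex.conj_im, Complex.one_re,
    Complex.one_im]
  ring

theorem one_sub_sum_norm_sq_axisAut (hζ : ‖ζ‖ < 1) (hD : 1 + starRingEnd ℂ ζ * z k ≠ 0) :
    1 - ∑ i, ‖axisAut k ζ z i‖ ^ 2 =
      (1 - ‖ζ‖ ^ 2) * (1 - ∑ i, ‖z i‖ ^ 2) / ‖1 + starRingEnd ℂ ζ * z k‖ ^ 2 := by
  have hterm : ∀ i, ‖axisAut k ζ z i‖ ^ 2 * ‖1 + starRingEnd ℂ ζ * z k‖ ^ 2 =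
      (1 - ‖ζ‖ ^ 2) * ‖z i‖ ^ 2 +
        if i = k then ‖z k + ζ‖ ^ 2 - (1 - ‖ζ‖ ^ 2) * ‖z k‖ ^ 2 else 0 := by
    intro i
    rw [← mul_pow, ← norm_mul, axisAut, div_mul_cancel₀ _ hD]
    split_ifs with hi
    · rw [hi]
      ring
    · rw [norm_mul, mul_pow, Complex.norm_real, Real.norm_eq_abs, sq_abs,
        Real.sq_sqrt (one_sub_norm_sq_pos hζ).le, add_zero]
  have hsum := Finset.sum_congr rfl fun i (_ : i ∈ Finset.univ) => hterm i
  rw [← Finset.sum_mul, Finset.sum_add_distrib, ← Finset.mul_sum, Finset.sum_ite_eq',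
    if_pos (Finset.mem_univ k)] at hsum
  rw [eq_div_iff (by positivity)]
  linear_combination norm_one_add_conj_mul_sq_sub_norm_add_sq ζ (z k) - hsum

theorem mapsTo_axisAut (hζ : ‖ζ‖ < 1) : MapsTo (axisAut k ζ) (eball n) (eball n) := by
  intro z hz
  have hD := one_add_conj_mul_apply_ne_zero hζ hz k
  have hζ' := one_sub_norm_sq_pos hζ
  rw [mem_eball_iff] at hz ⊢
  rw [one_sub_sum_norm_sq_axisAut hζ hD]
  positivity

theorem leftInvOn_axisAut_neg (hζ : ‖ζ‖ < 1) :
    LeftInvOn (axisAut k (-ζ)) (axisAut k ζ) (eball n) := by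
  intro z hz
  have hD := one_add_conj_mul_apply_ne_zero hζ hz k
  have hs := ofReal_sqrt_one_sub_norm_sq_sq hζ
  have hs0 := ofReal_sqrt_one_sub_norm_sq_ne_zero hζ
  have hden : 1 + starRingEnd ℂ (-ζ) * axisAut k ζ z k =
      (√(1 - ‖ζ‖ ^ 2) : ℂ) ^ 2 / (1 + starRingEnd ℂ ζ * z k) := by
    rw [hs, axisAut, if_pos rfl, map_neg]
    field_simp
    ring
  funext i
  rw [axisAut, hden, norm_neg]
  by_cases hi : i = k
  · subst hi
    simp only [axisAut, if_true]
    rw [div_add' _ _ _ hD, div_div_div_cancel_right₀ hD, div_eq_iff (pow_ne_zero 2 hs0), hs]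
    ring
  · simp only [axisAut, if_neg hi]
    field_simp

theorem hasFDerivAt_axisAut_apply (hD : 1 + starRingEnd ℂ ζ * z k ≠ 0) (i : Fin n) :
    HasFDerivAt (fun w => axisAut k ζ w i)
      ((1 + starRingEnd ℂ ζ * z k)⁻¹ • ((if i = k then (1 : ℂ) else √(1 - ‖ζ‖ ^ 2)) •
          ContinuousLinearMap.proj (R := ℂ) (φ := fun _ : Fin n => ℂ) i -
        (axisAut k ζ z i * starRingEnd ℂ ζ) • ContinuousLinearMap.proj k)) z := by
  have hcoord (j : Fin n) : HasFDerivAt (fun w : Fin n → ℂ => w j)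
      (ContinuousLinearMap.proj (R := ℂ) (φ := fun _ : Fin n => ℂ) j) z := hasFDerivAt_apply j z
  have hnum : HasFDerivAt (fun w : Fin n → ℂ => if i = k then w k + ζ else √(1 - ‖ζ‖ ^ 2) * w i)
      ((if i = k then (1 : ℂ) else √(1 - ‖ζ‖ ^ 2)) •
        ContinuousLinearMap.proj (R := ℂ) (φ := fun _ : Fin n => ℂ) i) z := by
    split_ifs with hi
    · rw [hi, one_smul]
      exact (hcoord k).add_const ζ
    · exact (hcoord i).const_mul _
  have hden := ((hcoord k).const_mul (starRingEnd ℂ ζ)).const_add 1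
  simpa only [axisAut, smul_smul] using hasFDerivAt_div hnum hden hD

theorem differentiableAt_axisAut (hD : 1 + starRingEnd ℂ ζ * z k ≠ 0) :
    DifferentiableAt ℂ (axisAut k ζ) z :=
  differentiableAt_pi.2 fun i => (hasFDerivAt_axisAut_apply hD i).differentiableAt

theorem differentiableOn_axisAut (hζ : ‖ζ‖ < 1) : DifferentiableOn ℂ (axisAut k ζ) (eball n) :=
  fun _ hz => (differentiableAt_axisAut
    (one_add_conj_mul_apply_ne_zero hζ hz k)).differentiableWithinAt

theorem isAutB_axisAut (hζ : ‖ζ‖ < 1) : IsAutB n (axisAut k ζ) := by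
  have hζ' : ‖-ζ‖ < 1 := by rwa [norm_neg]
  have hleft : LeftInvOn (axisAut k (-ζ)) (axisAut k ζ) (eball n) := leftInvOn_axisAut_neg hζ
  have hright : LeftInvOn (axisAut k ζ) (axisAut k (-ζ)) (eball n) := by
    simpa only [neg_neg] using leftInvOn_axisAut_neg (k := k) hζ'
  exact ⟨differentiableOn_axisAut hζ,
    InvOn.bijOn ⟨hleft, hright⟩ (mapsTo_axisAut hζ) (mapsTo_axisAut hζ'),
    axisAut k (-ζ), differentiableOn_axisAut hζ', hleft, hright⟩

theorem axisAut_zero (k : Fin n) (ζ : ℂ) : axisAut k ζ 0 = Pi.single k ζ := by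
  funext i
  simp [axisAut, Pi.single_apply]

theorem pd_axisAut_apply (hD : 1 + starRingEnd ℂ ζ * z k ≠ 0) (i j : Fin n) :
    pd n j (fun w => axisAut k ζ w i) z = (1 + starRingEnd ℂ ζ * z k)⁻¹ *
      ((if i = j then (if i = k then (1 : ℂ) else √(1 - ‖ζ‖ ^ 2)) else 0) -
        if k = j then axisAut k ζ z i * starRingEnd ℂ ζ else 0) := by
  rw [pd, (hasFDerivAt_axisAut_apply hD i).fderiv]
  simp [Pi.single_apply, -ite_smul]

theorem fderiv_axisAut_zero_single (hζ : ‖ζ‖ < 1) (i : Fin n) :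
    fderiv ℂ (axisAut k ζ) 0 (Pi.single i 1) =
      (√(1 - ‖ζ‖ ^ 2) : ℂ) ^ (if i = k then 2 else 1) • Pi.single i 1 := by
  have hD : 1 + starRingEnd ℂ ζ * (0 : Fin n → ℂ) k ≠ 0 := by simp
  funext j
  have hpd : fderiv ℂ (axisAut k ζ) 0 (Pi.single i 1) j = pd n i (fun w => axisAut k ζ w j) 0 := by
    rw [pd, fderiv_apply (differentiableAt_axisAut hD)]
    rfl
  rw [hpd, pd_axisAut_apply hD, axisAut_zero]
  by_cases hi : i = k
  · simp only [hi, if_true, ofReal_sqrt_one_sub_norm_sq_sq hζ]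
    by_cases hj : j = k <;> simp [hj, mul_comm]
  · by_cases hj : j = i <;> simp [hi, hj, Ne.symm hi]

theorem JDet_axisAut (hζ : ‖ζ‖ < 1) (hD : 1 + starRingEnd ℂ ζ * z k ≠ 0) :
    JDet n (axisAut k ζ) z = (√(1 - ‖ζ‖ ^ 2) / (1 + starRingEnd ℂ ζ * z k)) ^ (n + 1) := by
  have hJac : Jac n (axisAut k ζ) z =
      (Matrix.diagonal fun _ => √(1 - ‖ζ‖ ^ 2) / (1 + starRingEnd ℂ ζ * z k)).updateCol k
        fun i => pd n k (fun w => axisAut k ζ w i) z := by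
    ext i j
    rw [Jac, Matrix.of_apply, Matrix.updateCol_apply]
    split_ifs with hj
    · rw [hj]
    · rw [pd_axisAut_apply hD, Matrix.diagonal_apply, if_neg (Ne.symm hj)]
      split_ifs with hij hik
      · exact absurd (hij.symm.trans hik) hj
      · ring
      · ring
  have hkk : pd n k (fun w => axisAut k ζ w k) z =
      (√(1 - ‖ζ‖ ^ 2) / (1 + starRingEnd ℂ ζ * z k)) ^ 2 := by
    rw [div_pow, ofReal_sqrt_one_sub_norm_sq_sq hζ, pd_axisAut_apply hD, axisAut]
    simp only [if_true]
    field_simp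
    ring
  rw [JDet, hJac, det_updateCol_diagonal, hkk, Finset.prod_const, Finset.card_erase_of_mem
    (Finset.mem_univ k), Finset.card_fin, ← pow_add]
  congr 1
  have := k.pos
  lia

end AxisAut

section FirstVariation

variable {n : ℕ} {k : Fin n}

theorem pd_JDet_Koebe_axisAut {F : (Fin n → ℂ) → (Fin n → ℂ)} {u : (Fin n → ℂ) → ℂ} {ζ : ℂ}
    (hζ : ‖ζ‖ < 1) (hF : ∀ᶠ w in 𝓝 (Pi.single k ζ), DifferentiableAt ℂ F w)
    (hu : DifferentiableAt ℂ u (Pi.single k ζ))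
    (hupow : ∀ᶠ w in 𝓝 (Pi.single k ζ), u w ^ (n + 1) * JDet n F w = 1) (i : Fin n) :
    pd n i (JDet n (Koebe n F (axisAut k ζ))) 0 = -((n : ℂ) + 1) *
      ((√(1 - ‖ζ‖ ^ 2) : ℂ) ^ (if i = k then 2 else 1) *
          (pd n i u (Pi.single k ζ) / u (Pi.single k ζ)) +
        if i = k then starRingEnd ℂ ζ else 0) := by
  have hs := ofReal_sqrt_one_sub_norm_sq_ne_zero hζ
  have hD : ∀ᶠ z : Fin n → ℂ in 𝓝 0, 1 + starRingEnd ℂ ζ * z k ≠ 0 :=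
    (((continuous_apply k).const_mul _).const_add 1).continuousAt.eventually_ne (by simp)
  have hv : HasFDerivAt (fun z : Fin n → ℂ => (1 + starRingEnd ℂ ζ * z k) / √(1 - ‖ζ‖ ^ 2))
      ((√(1 - ‖ζ‖ ^ 2) : ℂ)⁻¹ • starRingEnd ℂ ζ •
        ContinuousLinearMap.proj (R := ℂ) (φ := fun _ : Fin n => ℂ) k) 0 := by
    simpa only [div_eq_inv_mul] using
      (((hasFDerivAt_apply k _).const_mul _).const_add 1).const_mul _
  have hvpow : ∀ᶠ z : Fin n → ℂ in 𝓝 0,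
      ((1 + starRingEnd ℂ ζ * z k) / √(1 - ‖ζ‖ ^ 2)) ^ (n + 1) * JDet n (axisAut k ζ) z = 1 :=
    hD.mono fun z hz => by
      rw [JDet_axisAut hζ hz, ← mul_pow, div_mul_div_cancel₀ hs, div_self hz, one_pow]
  have hvlog : pd n i (fun z => (1 + starRingEnd ℂ ζ * z k) / √(1 - ‖ζ‖ ^ 2)) 0 /
      ((1 + starRingEnd ℂ ζ * (0 : Fin n → ℂ) k) / √(1 - ‖ζ‖ ^ 2)) =
        if i = k then starRingEnd ℂ ζ else 0 := by
    rw [pd, hv.fderiv]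
    by_cases hi : i = k
    · simp [hi, field]
    · simp [hi]
  have hσ0 := axisAut_zero k ζ
  rw [← hσ0] at hF hu hupow
  rw [pd_JDet_Koebe hF (hD.mono fun z hz => differentiableAt_axisAut hz) hu hv.differentiableAt
    hupow hvpow, hvlog, fderiv_axisAut_zero_single hζ, hσ0, map_smul, smul_eq_mul, mul_div_assoc,
    pd]

-- The conclusion says that the Wirtinger derivative `∂(f f̄)` vanishes at `z`.
theorem conj_mul_add_mul_conj_eq_zero_of_isLocalMax_norm {f : ℂ → ℂ} {a b z : ℂ}
    (hf : HasFDerivAt f (a • (1 : ℂ →L[ℝ] ℂ) + b • (Complex.conjCLE : ℂ →L[ℝ] ℂ)) z)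
    (hmax : IsLocalMax (fun ζ => ‖f ζ‖) z) :
    starRingEnd ℂ (f z) * a + f z * starRingEnd ℂ b = 0 := by
  have hmaxsq : IsLocalMax (fun ζ => ‖f ζ‖ ^ 2) z :=
    hmax.mono fun ζ hζ => pow_le_pow_left₀ (norm_nonneg _) hζ 2
  have hzero := hmaxsq.hasFDerivAt_eq_zero hf.norm_sq
  have hre (v : ℂ) : ((starRingEnd ℂ (f z) * a + f z * starRingEnd ℂ b) * v).re = 0 := by
    have hinner : inner ℝ (f z) (a * v + b * starRingEnd ℂ v) = 0 :=
      (smul_eq_zero.1 (DFunLike.congr_fun hzero v)).resolve_left two_ne_zero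
    simp only [Complex.inner, Complex.mul_re, Complex.mul_im, Complex.add_re, Complex.add_im,
      Complex.conj_re, Complex.conj_im] at hinner ⊢
    linear_combination hinner
  have hself := hre (starRingEnd ℂ (starRingEnd ℂ (f z) * a + f z * starRingEnd ℂ b))
  rwa [Complex.mul_conj, Complex.ofReal_re, Complex.normSq_eq_zero] at hself

theorem hasFDerivAt_sqrt_one_sub_norm_sq_pow_zero (m : ℕ) :
    HasFDerivAt (fun ζ : ℂ => (√(1 - ‖ζ‖ ^ 2) : ℂ) ^ m) (0 : ℂ →L[ℝ] ℂ) 0 := by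
  have hnorm : HasFDerivAt (fun ζ : ℂ => 1 - ‖ζ‖ ^ 2) (0 : ℂ →L[ℝ] ℝ) 0 := by
    simpa using (hasStrictFDerivAt_norm_sq (0 : ℂ)).hasFDerivAt.const_sub 1
  have hcast := Complex.ofRealCLM.hasFDerivAt.comp 0 (hnorm.sqrt (by simp))
  simpa using hcast.pow m

theorem hasDerivAt_pd_div_single {u : (Fin n → ℂ) → ℂ}
    (hu : ∀ᶠ z in 𝓝 0, DifferentiableAt ℂ u z) (hu0 : u 0 = 1) (i k : Fin n) :
    HasDerivAt (fun ζ : ℂ => pd n i u (Pi.single k ζ) / u (Pi.single k ζ))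
      (pd2 n k i u 0 - pd n i u 0 * pd n k u 0) 0 := by
  have haxis : HasDerivAt (fun ζ : ℂ => (Pi.single k ζ : Fin n → ℂ)) (Pi.single k 1) 0 :=
    hasDerivAt_single k 0
  have hcomp {f : (Fin n → ℂ) → ℂ} (hf : DifferentiableAt ℂ f 0) :
      HasDerivAt (fun ζ : ℂ => f (Pi.single k ζ)) (pd n k f 0) 0 := by
    have hf' : HasFDerivAt f (fderiv ℂ f 0) (Pi.single k 0) := by
      simpa only [Pi.single_zero] using hf.hasFDerivAt
    exact hf'.comp_hasDerivAt 0 haxis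
  have hpd : DifferentiableAt ℂ (fun z => pd n i u z) 0 :=
    differentiableAt_fderiv_apply hu (Pi.single i 1)
  have hquot := (hcomp hpd).fun_div (hcomp hu.self_of_nhds) (by simp [hu0])
  simpa [hu0, pd2] using hquot

theorem hasFDerivAt_scaled_pd_div_single_add_conj {u : (Fin n → ℂ) → ℂ}
    (hu : ∀ᶠ z in 𝓝 0, DifferentiableAt ℂ u z) (hu0 : u 0 = 1) (i k : Fin n) (m : ℕ) (b : ℂ) :
    HasFDerivAt (fun ζ : ℂ => (√(1 - ‖ζ‖ ^ 2) : ℂ) ^ m *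
        (pd n i u (Pi.single k ζ) / u (Pi.single k ζ)) + b * starRingEnd ℂ ζ)
      ((pd2 n k i u 0 - pd n i u 0 * pd n k u 0) • (1 : ℂ →L[ℝ] ℂ) +
        b • (Complex.conjCLE : ℂ →L[ℝ] ℂ)) 0 := by
  have hquot := (hasDerivAt_pd_div_single hu hu0 i k).complexToReal_fderiv
  have hconj : HasFDerivAt (fun ζ : ℂ => b * starRingEnd ℂ ζ)
      (b • (Complex.conjCLE : ℂ →L[ℝ] ℂ)) 0 := Complex.conjCLE.hasFDerivAt.const_mul b
  refine (((hasFDerivAt_sqrt_one_sub_norm_sq_pow_zero m).mul hquot).add hconj).congr_fderiv ?_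
  simp

theorem pd_eq_of_pow_mul_eq_one {m : ℕ} {u J : (Fin n → ℂ) → ℂ} {z : Fin n → ℂ}
    (hu : DifferentiableAt ℂ u z) (hpow : ∀ᶠ w in 𝓝 z, u w ^ (m + 1) * J w = 1) (hz : u z = 1)
    (i : Fin n) : pd n i J z = -((m : ℂ) + 1) * pd n i u z := by
  have hJ : J z = 1 := by simpa [hz] using hpow.self_of_nhds
  rw [pd, (hasFDerivAt_of_pow_mul_eq_one hu.hasFDerivAt hpow).fderiv, hJ, hz]
  simp [pd]

theorem eventually_norm_lt_one : ∀ᶠ ζ in 𝓝 (0 : ℂ), ‖ζ‖ < 1 :=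
  continuous_norm.continuousAt.eventually_lt_const (by simp)

theorem tendsto_single_zero (k : Fin n) :
    Tendsto (fun ζ : ℂ => (Pi.single k ζ : Fin n → ℂ)) (𝓝 0) (𝓝 0) :=
  (continuous_single k).tendsto' 0 0 (Pi.single_zero k)

theorem eventually_norm_pd_JDet_Koebe_axisAut_le {F : (Fin n → ℂ) → (Fin n → ℂ)} {C : ℝ}
    (hC : ∀ᶠ ζ in 𝓝 0, ∀ σ : (Fin n → ℂ) → (Fin n → ℂ), IsAutB n σ → σ 0 = ζ →
      euclNorm n (fun i => pd n i (JDet n (Koebe n F σ)) 0) ≤ C) (i k : Fin n) :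
    ∀ᶠ ζ in 𝓝 (0 : ℂ), ‖pd n i (JDet n (Koebe n F (axisAut k ζ))) 0‖ ≤ C := by
  filter_upwards [eventually_norm_lt_one, (tendsto_single_zero k).eventually hC] with ζ hζ hCζ
  exact (norm_apply_le_euclNorm _ i).trans (hCζ _ (isAutB_axisAut hζ) (axisAut_zero k ζ))

theorem pd2_eq_of_eventually_norm_pd_JDet_Koebe_le {F : (Fin n → ℂ) → (Fin n → ℂ)}
    {u : (Fin n → ℂ) → ℂ} {i : Fin n} (hF : ∀ᶠ z in 𝓝 0, DifferentiableAt ℂ F z)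
    (hu : ∀ᶠ z in 𝓝 0, DifferentiableAt ℂ u z) (hu0 : u 0 = 1)
    (hupow : ∀ᶠ z in 𝓝 0, u z ^ (n + 1) * JDet n F z = 1)
    (hreal : starRingEnd ℂ (pd n i u 0) = pd n i u 0) (hne : pd n i u 0 ≠ 0)
    (hle : ∀ᶠ ζ in 𝓝 (0 : ℂ),
      ‖pd n i (JDet n (Koebe n F (axisAut k ζ))) 0‖ ≤ ‖pd n i (JDet n F) 0‖) :
    pd2 n k i u 0 = pd n i u 0 * pd n k u 0 - if i = k then 1 else 0 := by
  have haxis := tendsto_single_zero k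
  set b : ℂ := if i = k then 1 else 0 with hb
  have hmax : IsLocalMax (fun ζ : ℂ => ‖(√(1 - ‖ζ‖ ^ 2) : ℂ) ^ (if i = k then 2 else 1) *
      (pd n i u (Pi.single k ζ) / u (Pi.single k ζ)) + b * starRingEnd ℂ ζ‖) 0 := by
    filter_upwards [hle, eventually_norm_lt_one, haxis.eventually hF.eventually_nhds,
      haxis.eventually hu, haxis.eventually hupow.eventually_nhds] with ζ hζle hζ hFζ huζ hpowζ
    rw [pd_JDet_Koebe_axisAut hζ hFζ huζ hpowζ, pd_eq_of_pow_mul_eq_one hu.self_of_nhds hupow hu0,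
      norm_mul, norm_mul] at hζle
    have hn1 : 0 < ‖-((n : ℂ) + 1)‖ :=
      norm_pos_iff.2 (neg_ne_zero.2 (Nat.cast_add_one_ne_zero n))
    simpa [hu0, hb] using le_of_mul_le_mul_left hζle hn1
  have hstationary := conj_mul_add_mul_conj_eq_zero_of_isLocalMax_norm
    (hasFDerivAt_scaled_pd_div_single_add_conj hu hu0 i k _ b) hmax
  have hsum : pd n i u 0 * (pd2 n k i u 0 - pd n i u 0 * pd n k u 0 + b) = 0 := by
    simpa [hu0, hreal, hb, mul_add, apply_ite] using hstationary
  linear_combination (mul_eq_zero.1 hsum).resolve_left hne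

end FirstVariation

section Schwarzian

variable {n : ℕ}

theorem pd2_comm {u : (Fin n → ℂ) → ℂ} {z : Fin n → ℂ} (hu : ∀ᶠ w in 𝓝 z, DifferentiableAt ℂ u w)
    (i j : Fin n) : pd2 n i j u z = pd2 n j i u z :=
  fderiv_fderiv_apply_comm hu (Pi.single j 1) (Pi.single i 1)

theorem oS0_eq_of_pd_eq_zero {F : (Fin n → ℂ) → (Fin n → ℂ)} {u : (Fin n → ℂ) → ℂ}
    {z : Fin n → ℂ} {l : Fin n} (hu : ∀ k ≠ l, pd n k u z = 0) (i j : Fin n) :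
    oS0 n F u i j z = (u z)⁻¹ * (pd2 n i j u z - oSchw n F i j l z * pd n l u z) := by
  rw [oS0, Finset.sum_eq_single l (fun k _ hk => by rw [hu k hk, mul_zero]) (by simp)]

end Schwarzian

theorem stmt_11_general (n : ℕ) [NeZero n] (F₀ : (Fin n → ℂ) → (Fin n → ℂ)) (u₀ : (Fin n → ℂ) → ℂ)
    (hF₀hol : ∀ᶠ z in 𝓝 0, DifferentiableAt ℂ F₀ z)
    (hu₀hol : ∀ᶠ z in 𝓝 0, DifferentiableAt ℂ u₀ z) (hu₀0 : u₀ 0 = 1)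
    (hu₀pow : ∀ᶠ z in 𝓝 0, u₀ z ^ (n + 1) * JDet n F₀ z = 1) (lam : ℝ) (hlam : 0 < lam)
    (hΛ : ∀ k : Fin n, pd n k (JDet n F₀) 0 = if k = 0 then (lam : ℂ) else 0)
    (hextremal : ∀ᶠ ζ in 𝓝 0, ∀ σ : (Fin n → ℂ) → (Fin n → ℂ), IsAutB n σ → σ 0 = ζ →
      euclNorm n (fun i => pd n i (JDet n (Koebe n F₀ σ)) 0) ≤ lam) :
    (lam : ℂ) ^ 2 + ((n : ℂ) + 1) * oSchw n F₀ 0 0 0 0 * lam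
        - ((n : ℂ) + 1) ^ 2 * oS0 n F₀ u₀ 0 0 0 - ((n : ℂ) + 1) ^ 2 = 0 ∧
    ∀ j : Fin n, j ≠ 0 →
      oSchw n F₀ 0 j 0 0 * lam - ((n : ℂ) + 1) * oS0 n F₀ u₀ 0 j 0 = 0 := by
  have hn1 : (n : ℂ) + 1 ≠ 0 := Nat.cast_add_one_ne_zero n
  have hpd (k : Fin n) : pd n k u₀ 0 = if k = 0 then (-(lam / (n + 1)) : ℂ) else 0 := by
    rw [← mul_right_inj' (neg_ne_zero.2 hn1),
      ← pd_eq_of_pow_mul_eq_one hu₀hol.self_of_nhds hu₀pow hu₀0, hΛ]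
    split_ifs
    · field_simp
    · rw [mul_zero]
  have hpd2 (k : Fin n) :
      pd2 n k 0 u₀ 0 = pd n 0 u₀ 0 * pd n k u₀ 0 - if 0 = k then 1 else 0 := by
    refine pd2_eq_of_eventually_norm_pd_JDet_Koebe_le hF₀hol hu₀hol hu₀0 hu₀pow ?_ ?_ ?_
    · simp [hpd]
    · simpa [hpd, hn1] using hlam.ne'
    · simpa [hΛ, abs_of_pos hlam] using eventually_norm_pd_JDet_Koebe_axisAut_le hextremal 0 k
  have hS0 (j : Fin n) : oS0 n F₀ u₀ 0 j 0 =
      pd n 0 u₀ 0 * pd n j u₀ 0 - (if 0 = j then 1 else 0) - oSchw n F₀ 0 j 0 0 * pd n 0 u₀ 0 := by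
    rw [oS0_eq_of_pd_eq_zero (l := 0) (fun k hk => by rw [hpd, if_neg hk]), hu₀0, inv_one, one_mul,
      pd2_comm hu₀hol, hpd2]
  refine ⟨?_, fun j hj => ?_⟩
  · rw [hS0, hpd, if_pos rfl, if_pos rfl]
    field_simp
    ring
  · rw [hS0, hpd, hpd, if_pos rfl, if_neg hj, if_neg hj.symm]
    field_simp
    ring

/-- if the extremal `F₀` is normalized so that `∇(JF₀)(0) = (λ,0,…,0)`
with `λ > 0`, then `λ² + (n+1)S¹₁₁λ − (n+1)²S⁰₁₁ − (n+1)² = 0` and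
`S¹₁ⱼλ − (n+1)S⁰₁ⱼ = 0` for `j = 2,…,n`. -/
theorem stmt_11 (n : ℕ) [NeZero n] (hn : 2 ≤ n) (F₀ : (Fin n → ℂ) → (Fin n → ℂ))
    (hF₀hol : DifferentiableOn ℂ F₀ (eball n))
    (hF₀J : ∀ z ∈ eball n, JDet n F₀ z ≠ 0)
    (hF₀0 : F₀ 0 = 0) (hF₀D : Jac n F₀ 0 = 1)
    -- `u₀` is a local branch of `(JF₀)^{-1/(n+1)}` with `u₀(0) = 1`
    (u₀ : (Fin n → ℂ) → ℂ) (r : ℝ) (hr : 0 < r) (hr1 : r ≤ 1)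
    (hu₀hol : DifferentiableOn ℂ u₀ {z | euclNorm n z < r}) (hu₀0 : u₀ 0 = 1)
    (hu₀pow : ∀ z, euclNorm n z < r → u₀ z ^ (n + 1) * JDet n F₀ z = 1)
    (lam : ℝ) (hlam : 0 < lam)
    (hΛ : ∀ k : Fin n, pd n k (JDet n F₀) 0 = if k = 0 then (lam : ℂ) else 0)
    (hextremal : ∀ σ : (Fin n → ℂ) → (Fin n → ℂ), IsAutB n σ →
      euclNorm n (fun i => pd n i (JDet n (Koebe n F₀ σ)) 0) ≤ lam) :
    (lam : ℂ) ^ 2 + ((n : ℂ) + 1) * oSchw n F₀ 0 0 0 0 * lam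
        - ((n : ℂ) + 1) ^ 2 * oS0 n F₀ u₀ 0 0 0 - ((n : ℂ) + 1) ^ 2 = 0 ∧
    ∀ j : Fin n, j ≠ 0 →
      oSchw n F₀ 0 j 0 0 * lam - ((n : ℂ) + 1) * oS0 n F₀ u₀ 0 j 0 = 0 := by
  have hnhds {ρ : ℝ} (hρ : 0 < ρ) : {z : Fin n → ℂ | euclNorm n z < ρ} ∈ 𝓝 0 :=
    (isOpen_setOf_euclNorm_lt ρ).mem_nhds (by simpa [euclNorm] using hρ)
  exact stmt_11_general n F₀ u₀ (hF₀hol.eventually_differentiableAt (hnhds one_pos))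
    (hu₀hol.eventually_differentiableAt (hnhds hr)) hu₀0 (mem_of_superset (hnhds hr) hu₀pow) lam
    hlam hΛ (.of_forall fun _ σ hσ _ => hextremal σ hσ)

end
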